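/- For every graph class 𝒢, the class of complements of line graphs of graphs in 𝒢 is (tw,ω)-bounded if and only if it has bounded tree-independence number. -/

import Mathlib

open SimpleGraph

/-- The independence number of the subgraph of `G` induced by `s`:
the supremum of sizes of independent sets contained in `s`. -/
noncomputable def setIndepNum {V : Type*} (G : SimpleGraph V) (s : Set V) : ℕ :=
  sSup {n | ∃ t : Finset V, ↑t ⊆ s ∧ (∀ u ∈ t, ∀ v ∈ t, u ≠ v → ¬ G.Adj u v) ∧ t.card = n}

/-- A tree decomposition of a graph `G`. -/
structure TreeDecomp {V : Type*} (G : SimpleGraph V) where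
  ι : Type
  T : SimpleGraph ι
  tree : T.IsTree
  bag : ι → Set V
  bag_vert : ∀ v : V, ∃ i, v ∈ bag i
  bag_edge : ∀ u v : V, G.Adj u v → ∃ i, u ∈ bag i ∧ v ∈ bag i
  bag_conn : ∀ v : V, (T.induce {i | v ∈ bag i}).Connected

/-- The tree-independence number of `G`: the least `n` such that `G` has a tree
decomposition all of whose bags induce subgraphs with independence number at most `n`. -/
noncomputable def treeIndepNum {V : Type*} (G : SimpleGraph V) : ℕ :=
  sInf {n | ∃ D : TreeDecomp G, ∀ i, setIndepNum G (D.bag i) ≤ n}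

/-- The treewidth of `G`: the least `n` such that `G` has a tree decomposition
all of whose bags have at most `n + 1` vertices. -/
noncomputable def treewidth {V : Type*} (G : SimpleGraph V) : ℕ :=
  sInf {n | ∃ D : TreeDecomp G, ∀ i, (D.bag i).ncard ≤ n + 1}

/-- A finite graph, bundled. -/
structure FinGraph : Type 1 where
  V : Type
  finite : Finite V
  G : SimpleGraph V

/-- A class of (finite) graphs is `(tw, ω)`-bounded if there is a function `f` such that every
induced subgraph `G'` of a graph in the class satisfies `tw(G') ≤ f(ω(G'))`. -/
def TwOmegaBounded (C : Set FinGraph) : Prop :=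
  ∃ f : ℕ → ℕ, ∀ A ∈ C, ∀ s : Set A.V,
    treewidth (A.G.induce s) ≤ f ((A.G.induce s).cliqueNum)

/-- A class of graphs has bounded tree-independence number. -/
def BddTreeIndep (C : Set FinGraph) : Prop :=
  ∃ c : ℕ, ∀ A ∈ C, treeIndepNum A.G ≤ c

/-- A graph class is hereditary if it contains every graph isomorphic to an induced
subgraph of one of its members. -/
def Hereditary (C : Set FinGraph) : Prop :=
  ∀ A ∈ C, ∀ B : FinGraph, Nonempty (B.G ↪g A.G) → B ∈ C

/-- `G` is a clique partition graph (disjoint union of complete graphs): there is a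
partition of the vertices (given by the fibers of some map) such that two distinct
vertices are adjacent iff they lie in the same part. -/
def IsCliquePartitionGraph {V : Type*} (G : SimpleGraph V) : Prop :=
  ∃ (ι : Type) (f : V → ι), ∀ u v : V, u ≠ v → (G.Adj u v ↔ f u = f v)

/-- The class of complements of line graphs of graphs in `C` (as abstract graphs,
i.e. up to isomorphism). -/
def coLineClass (C : Set FinGraph) : Set FinGraph :=
  {B : FinGraph | ∃ A ∈ C, Nonempty (B.G ≃g (A.G.lineGraph)ᶜ)}

/-- A connected set of vertices missing an endpoint of an edge stays connected when that edge is
deleted. -/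
lemma reachable_deleteEdges_of_induce_preconnected {ι : Type*} {T : SimpleGraph ι} {C : Set ι}
    (hC : (T.induce C).Preconnected) {x y : ι} (hxy : ¬ (x ∈ C ∧ y ∈ C)) {c d : ι} (hc : c ∈ C)
    (hd : d ∈ C) : (T.deleteEdges {s(x, y)}).Reachable c d := by
  let F : T.induce C →g T.deleteEdges {s(x, y)} :=
    { toFun := Subtype.val
      map_rel' := by
        rintro ⟨a, ha⟩ ⟨b, hb⟩ hab
        refine deleteEdges_adj.2 ⟨hab, fun h => hxy ?_⟩
        rcases Sym2.eq_iff.1 (Set.mem_singleton_iff.1 h) with ⟨rfl, rfl⟩ | ⟨rfl, rfl⟩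
        · exact ⟨ha, hb⟩
        · exact ⟨hb, ha⟩ }
  exact (hC ⟨c, hc⟩ ⟨d, hd⟩).map F

/-- A path leaving a set `S` has an edge leaving `S` after which it does not use this edge. -/
lemma exists_leaving_edge {ι : Type*} {T : SimpleGraph ι} {S : Set ι} {s r : ι} (p : T.Walk s r)
    (hp : p.IsPath) (hs : s ∈ S) (hr : r ∉ S) :
    ∃ x ∈ S, ∃ y ∉ S, T.Adj x y ∧ (T.deleteEdges {s(x, y)}).Reachable y r := by
  induction p with
  | nil => exact absurd hs hr
  | @cons a b _ h q ih =>
    rw [Walk.cons_isPath_iff] at hp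
    by_cases hb : b ∈ S
    · exact ih hp.1 hb hr
    · exact ⟨a, hs, b, hb, h, reachable_deleteEdges_iff_exists_walk.2
        ⟨q, fun he => hp.2 (q.fst_mem_support_of_mem_edges he)⟩⟩

/-- In a tree, a set disjoint from a subtree `R` has an edge leaving it which every subtree
containing its inner endpoint and meeting `R` must use. -/
lemma SimpleGraph.IsTree.exists_separating_edge {ι : Type*} {T : SimpleGraph ι} (hT : T.IsTree)
    {S R : Set ι} (hS : S.Nonempty) (hR : (T.induce R).Connected) (hSR : Disjoint S R) :
    ∃ x ∈ S, ∃ y ∉ S, ∀ C : Set ι, (T.induce C).Preconnected → x ∈ C → (C ∩ R).Nonempty →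
      y ∈ C := by
  obtain ⟨s, hs⟩ := hS
  obtain ⟨r, hr⟩ := hR.nonempty
  obtain ⟨p, hp⟩ := hT.connected.preconnected.exists_isPath s r
  obtain ⟨x, hx, y, hy, hxy, hyr⟩ :=
    exists_leaving_edge p hp hs (fun h => Set.disjoint_left.1 hSR h hr)
  refine ⟨x, hx, y, hy, fun C hC hxC ⟨d, hdC, hdR⟩ => ?_⟩
  by_contra hyC
  refine isBridge_iff.1 (isAcyclic_iff_forall_adj_isBridge.1 hT.isAcyclic hxy) ?_
  have hxd := reachable_deleteEdges_of_induce_preconnected hC (x := x) (fun h => hyC h.2) hxC hdC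
  have hdr := reachable_deleteEdges_of_induce_preconnected hR.preconnected (x := x) (y := y)
    (fun h => Set.disjoint_left.1 hSR hx h.1) hdR hr
  exact (hxd.trans hdr).trans hyr.symm

/-- The Helly property for subtrees of a tree. -/
lemma SimpleGraph.IsTree.helly {ι α : Type*} {T : SimpleGraph ι} (hT : T.IsTree) (C : α → Set ι)
    (hC : ∀ a, (T.induce (C a)).Connected) (A : Finset α)
    (hA : ∀ a ∈ A, ∀ b ∈ A, (C a ∩ C b).Nonempty) : ∃ i, ∀ a ∈ A, i ∈ C a := by
  classical
  induction A using Finset.induction_on with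
  | empty => exact ⟨hT.connected.nonempty.some, by simp⟩
  | insert r A _ ih =>
    by_contra hcon
    push Not at hcon
    have hS : {i | ∀ a ∈ A, i ∈ C a}.Nonempty :=
      ih fun a ha b hb => hA a (by simp [ha]) b (by simp [hb])
    have hdisj : Disjoint {i | ∀ a ∈ A, i ∈ C a} (C r) := by
      refine Set.disjoint_left.2 fun i hi hir => ?_
      obtain ⟨a, ha, hia⟩ := hcon i
      rcases Finset.mem_insert.1 ha with rfl | ha
      · exact hia hir
      · exact hia (hi a ha)
    obtain ⟨x, hx, y, hy, hsep⟩ := hT.exists_separating_edge hS (hC r) hdisj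
    exact hy fun a ha => hsep _ (hC a).preconnected (hx a ha) (hA a (by simp [ha]) r (by simp))

/-- In a tree decomposition, some bag contains one side of any complete bipartite subgraph. -/
lemma TreeDecomp.exists_bag_of_complete_bipartite {V : Type*} {G : SimpleGraph V}
    (D : TreeDecomp G) (A B : Finset V) (hAB : ∀ a ∈ A, ∀ b ∈ B, G.Adj a b) :
    ∃ i, (∀ a ∈ A, a ∈ D.bag i) ∨ ∀ b ∈ B, b ∈ D.bag i := by
  by_cases hA : ∀ a ∈ A, ∀ b ∈ A, ({i | a ∈ D.bag i} ∩ {i | b ∈ D.bag i}).Nonempty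
  · obtain ⟨i, hi⟩ := D.tree.helly (fun a => {i | a ∈ D.bag i}) D.bag_conn A hA
    exact ⟨i, Or.inl hi⟩
  · push Not at hA
    obtain ⟨a, ha, a', ha', hdisj⟩ := hA
    obtain ⟨x, hx, y, hy, hsep⟩ := D.tree.exists_separating_edge (D.bag_vert a) (D.bag_conn a')
      (Set.disjoint_iff_inter_eq_empty.2 hdisj)
    refine ⟨y, Or.inr fun b hb => ?_⟩
    obtain ⟨i, hai, hbi⟩ := D.bag_edge a b (hAB a ha b hb)
    obtain ⟨j, haj, hbj⟩ := D.bag_edge a' b (hAB a' ha' b hb)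
    have hconn := induce_union_connected (D.bag_conn a).preconnected (D.bag_conn b).preconnected
      ⟨i, hai, hbi⟩
    exact (hsep _ hconn.preconnected (Or.inl hx) ⟨j, Or.inr hbj, haj⟩).resolve_left hy

/-- The star-shaped tree decomposition for an independent set `S`: the central bag is the complement
of `S` and every other bag adds a single vertex of `S`. -/
def starTreeDecomp {V : Type} (G : SimpleGraph V) (S : Set V)
    (hS : ∀ u ∈ S, ∀ v ∈ S, ¬ G.Adj u v) : TreeDecomp G where
  ι := Option V
  T := starGraph none
  tree := isTree_starGraph none
  bag i := {v | v ∉ S ∨ i = some v}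
  bag_vert v := ⟨some v, Or.inr rfl⟩
  bag_edge u v huv := by
    by_cases hu : u ∈ S
    · exact ⟨some u, Or.inr rfl, Or.inl fun hv => hS u hu v hv huv⟩
    · exact ⟨some v, Or.inl hu, Or.inr rfl⟩
  bag_conn v := by
    by_cases hv : v ∈ S
    · have hnodes : {i : Option V | v ∈ {w | w ∉ S ∨ i = some w}} = {some v} := by
        ext i; simp [hv]
      rw [hnodes]
      have : Nonempty ({some v} : Set (Option V)) := ⟨⟨some v, rfl⟩⟩
      exact ⟨.of_subsingleton⟩
    · have hnodes : {i : Option V | v ∈ {w | w ∉ S ∨ i = some w}} = Set.univ := by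
        ext i; simp [hv]
      rw [hnodes]
      exact (induceUnivIso _).connected_iff.2 (connected_starGraph none)

/-- The restriction of a tree decomposition to an induced subgraph. -/
def TreeDecomp.induce {V : Type*} {G : SimpleGraph V} (D : TreeDecomp G) (s : Set V) :
    TreeDecomp (G.induce s) where
  ι := D.ι
  T := D.T
  tree := D.tree
  bag i := {v | v.1 ∈ D.bag i}
  bag_vert v := D.bag_vert v
  bag_edge u v huv := D.bag_edge u v huv
  bag_conn v := D.bag_conn v

lemma card_le_setIndepNum {V : Type*} [Finite V] (G : SimpleGraph V) {s : Set V} {t : Finset V}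
    (hts : ↑t ⊆ s) (ht : ∀ u ∈ t, ∀ v ∈ t, u ≠ v → ¬ G.Adj u v) : t.card ≤ setIndepNum G s := by
  have := Fintype.ofFinite V
  refine le_csSup ⟨Fintype.card V, ?_⟩ ⟨t, hts, ht, rfl⟩
  rintro n ⟨t, -, -, rfl⟩
  exact t.card_le_univ

lemma exists_treeDecomp_setIndepNum_le {V : Type} [Finite V] (G : SimpleGraph V) :
    ∃ D : TreeDecomp G, ∀ i, setIndepNum G (D.bag i) ≤ treeIndepNum G := by
  have := Fintype.ofFinite V
  refine Nat.sInf_mem (s := {n | ∃ D : TreeDecomp G, ∀ i, setIndepNum G (D.bag i) ≤ n})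
    ⟨Fintype.card V, starTreeDecomp G ∅ (by simp), fun i => csSup_le' ?_⟩
  rintro n ⟨t, -, -, rfl⟩
  exact t.card_le_univ

lemma exists_treeDecomp_ncard_le {V : Type} [Finite V] (G : SimpleGraph V) :
    ∃ D : TreeDecomp G, ∀ i, (D.bag i).ncard ≤ treewidth G + 1 :=
  Nat.sInf_mem (s := {n | ∃ D : TreeDecomp G, ∀ i, (D.bag i).ncard ≤ n + 1})
    ⟨Nat.card V, starTreeDecomp G ∅ (by simp), fun _ =>
      (Set.ncard_le_card _).trans (Nat.le_succ _)⟩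

/-- A complete bipartite subgraph with both sides of size at least `n` forces treewidth at least
`n - 1`. -/
lemma le_treewidth_add_one {V : Type} [Finite V] (G : SimpleGraph V) {A B : Finset V} {n : ℕ}
    (hA : n ≤ A.card) (hB : n ≤ B.card) (hAB : ∀ a ∈ A, ∀ b ∈ B, G.Adj a b) :
    n ≤ treewidth G + 1 := by
  obtain ⟨D, hD⟩ := exists_treeDecomp_ncard_le G
  obtain ⟨i, h⟩ := D.exists_bag_of_complete_bipartite A B hAB
  have key (X : Finset V) (hX : ∀ x ∈ X, x ∈ D.bag i) : X.card ≤ treewidth G + 1 := by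
    rw [← Set.ncard_coe_finset X]
    exact (Set.ncard_le_ncard hX (Set.toFinite _)).trans (hD i)
  rcases h with h | h
  · exact hA.trans (key A h)
  · exact hB.trans (key B h)

/-- `φ` represents `H` as the complement of an intersection graph of pairs. -/
def IsCoLineLabelling {W V : Type*} (H : SimpleGraph W) (φ : W → Sym2 V) : Prop :=
  ∀ e e', H.Adj e e' ↔ ∀ v ∈ φ e, v ∉ φ e'

lemma exists_isCoLineLabelling {A B : FinGraph} (g : B.G ≃g (A.G.lineGraph)ᶜ) :
    ∃ φ : B.V → Sym2 A.V, Function.Injective φ ∧ IsCoLineLabelling B.G φ := by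
  refine ⟨fun e => (g e).1, Subtype.val_injective.comp g.injective, fun e e' => ?_⟩
  rw [← g.map_adj_iff, compl_adj, lineGraph_adj_iff_exists]
  constructor
  · rintro ⟨hne, h⟩ v hv hv'
    exact h ⟨hne, v, hv, hv'⟩
  · intro h
    refine ⟨fun heq => ?_, fun ⟨_, v, hv, hv'⟩ => h v hv hv'⟩
    have hmem := Sym2.out_fst_mem (g e).1
    exact h _ hmem (congrArg Subtype.val heq ▸ hmem)

/-- If every pair in `t` meets a pair in `K` and every point is in at most `c` pairs of `t`, then
`t` has at most `2 * |K| * c` elements. -/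
lemma card_le_of_forall_meets {W V : Type*} [DecidableEq W] [DecidableEq V] (φ : W → Sym2 V)
    (t K : Finset W) (c : ℕ) (hK : ∀ e ∈ t, ∃ k ∈ K, ∃ v ∈ φ k, v ∈ φ e)
    (hc : ∀ v, (t.filter (v ∈ φ ·)).card ≤ c) : t.card ≤ 2 * K.card * c := by
  have hsub : t ⊆ K.biUnion fun k => (φ k).toFinset.biUnion fun v => t.filter (v ∈ φ ·) := by
    intro e he
    obtain ⟨k, hk, v, hv, hve⟩ := hK e he
    simp only [Finset.mem_biUnion, Finset.mem_filter, Sym2.mem_toFinset]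
    exact ⟨k, hk, v, hv, he, hve⟩
  have hcard (z : Sym2 V) : z.toFinset.card ≤ 2 := by
    rw [Sym2.card_toFinset]; split_ifs <;> simp
  refine (Finset.card_le_card hsub).trans ((Finset.card_biUnion_le_card_mul _ _ (2 * c)
    fun k _ => (Finset.card_biUnion_le_card_mul _ _ c fun v _ => hc v).trans
      (Nat.mul_le_mul_right _ (hcard _))).trans_eq (by ring))

/-- In a complement of a line graph, sets of small independence number are bounded in terms of the
clique number. -/
lemma card_le_two_mul_cliqueNum_mul {W V : Type*} [Finite W] {H : SimpleGraph W} {φ : W → Sym2 V}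
    (hφ : IsCoLineLabelling H φ) (t : Finset W) (c : ℕ)
    (hc : ∀ t' ⊆ t, (∀ u ∈ t', ∀ v ∈ t', u ≠ v → ¬ H.Adj u v) → t'.card ≤ c) :
    t.card ≤ 2 * H.cliqueNum * c := by
  classical
  obtain ⟨K, hK, hmax⟩ := (t.powerset.filter fun K : Finset W => H.IsClique (K : Set W)).exists_max_image
    Finset.card ⟨∅, by simp⟩
  rw [Finset.mem_filter, Finset.mem_powerset] at hK
  have hle : t.card ≤ 2 * K.card * c := by
    refine card_le_of_forall_meets φ t K c (fun e he => ?_) fun v => hc _ (Finset.filter_subset _ _)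
      fun u hu w hw _ hadj => (hφ u w).1 hadj v (Finset.mem_filter.1 hu).2 (Finset.mem_filter.1 hw).2
    by_contra hcon
    push Not at hcon
    have hadj (k) (hk : k ∈ K) : H.Adj e k := ((hφ k e).2 (hcon k hk)).symm
    have heK : e ∉ K := fun h => H.loopless.irrefl e (hadj e h)
    have := hmax (insert e K) (by
      rw [Finset.mem_filter, Finset.mem_powerset, Finset.coe_insert]
      exact ⟨Finset.insert_subset he hK.1, hK.2.insert fun k hk _ => hadj k hk⟩)
    rw [Finset.card_insert_of_notMem heK] at this
    omega
  refine hle.trans (Nat.mul_le_mul_right _ (Nat.mul_le_mul_left _ ?_))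
  exact IsClique.card_le_cliqueNum (tc := hK.2)

/-- Two points of large degree give a large complete bipartite graph between two stars. -/
lemma exists_disjoint_stars {W V : Type*} [Fintype W] [DecidableEq V] {φ : W → Sym2 V}
    (hinj : Function.Injective φ) {u v : V} (huv : u ≠ v) (n : ℕ)
    (hu : 2 * n + 1 ≤ (Finset.univ.filter (u ∈ φ ·)).card)
    (hv : 2 * n + 1 ≤ (Finset.univ.filter (v ∈ φ ·)).card) :
    ∃ A B : Finset W, A.card = n ∧ B.card = n ∧ (∀ a ∈ A, u ∈ φ a) ∧ (∀ b ∈ B, v ∈ φ b) ∧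
      ∀ a ∈ A, ∀ b ∈ B, ∀ w ∈ φ a, w ∉ φ b := by
  classical
  have hone : (Finset.univ.filter fun e => u ∈ φ e ∧ v ∈ φ e).card ≤ 1 := by
    refine Finset.card_le_one.2 fun a ha b hb => hinj ?_
    rw [Finset.mem_filter] at ha hb
    rw [(Sym2.mem_and_mem_iff huv).1 ha.2, (Sym2.mem_and_mem_iff huv).1 hb.2]
  have hone' : (Finset.univ.filter fun e => v ∈ φ e ∧ u ∈ φ e).card ≤ 1 := by
    simpa only [and_comm] using hone
  have hu' := Finset.card_filter_add_card_filter_not (s := Finset.univ.filter (u ∈ φ ·)) (v ∈ φ ·)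
  have hv' := Finset.card_filter_add_card_filter_not (s := Finset.univ.filter (v ∈ φ ·)) (u ∈ φ ·)
  simp only [Finset.filter_filter] at hu' hv'
  obtain ⟨A, hA, hAn⟩ := Finset.exists_subset_card_eq
    (show n ≤ (Finset.univ.filter fun e => u ∈ φ e ∧ v ∉ φ e).card by omega)
  have hA' (a) (ha : a ∈ A) : u ∈ φ a ∧ v ∉ φ a := (Finset.mem_filter.1 (hA ha)).2
  set B₀ := Finset.univ.filter fun e => v ∈ φ e ∧ u ∉ φ e with hB₀
  have hB₀n : 2 * n ≤ B₀.card := by omega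
  have hbad : (B₀.filter fun b => ∃ a ∈ A, ∃ w ∈ φ a, w ∈ φ b).card ≤ n := by
    rw [← hAn]
    refine Finset.card_le_card_of_forall_subsingleton (fun b a => ∃ w ∈ φ a, w ∈ φ b)
      (fun b hb => (Finset.mem_filter.1 hb).2) fun a ha b hb b' hb' => hinj ?_
    obtain ⟨hb, w, hwa, hwb⟩ := hb
    obtain ⟨hb', w', hwa', hwb'⟩ := hb'
    simp only [hB₀, Finset.mem_filter, Finset.mem_univ, true_and] at hb hb'
    obtain ⟨hua, hva⟩ := hA' a ha
    have hvw : v ≠ w := fun h => hva (h ▸ hwa)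
    have hvw' : v ≠ w' := fun h => hva (h ▸ hwa')
    have huw : u ≠ w := fun h => hb.1.2 (h ▸ hwb)
    have huw' : u ≠ w' := fun h => hb'.1.2 (h ▸ hwb')
    have h1 := (Sym2.mem_and_mem_iff huw).1 ⟨hua, hwa⟩
    have h2 := (Sym2.mem_and_mem_iff huw').1 ⟨hua, hwa'⟩
    have hww : w = w' := Sym2.congr_right.1 (h1.symm.trans h2)
    subst hww
    rw [(Sym2.mem_and_mem_iff hvw).1 ⟨hb.1.1, hwb⟩, (Sym2.mem_and_mem_iff hvw).1 ⟨hb'.1.1, hwb'⟩]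
  have hsplit := Finset.card_filter_add_card_filter_not (s := B₀)
    (fun b => ∃ a ∈ A, ∃ w ∈ φ a, w ∈ φ b)
  obtain ⟨B, hB, hBn⟩ := Finset.exists_subset_card_eq
    (show n ≤ (B₀.filter fun b => ¬ ∃ a ∈ A, ∃ w ∈ φ a, w ∈ φ b).card by omega)
  refine ⟨A, B, hAn, hBn, fun a ha => (hA' a ha).1, fun b hb => ?_, fun a ha b hb w hwa hwb => ?_⟩
  · exact (Finset.mem_filter.1 (Finset.mem_filter.1 (hB hb)).1).2.1
  · exact (Finset.mem_filter.1 (hB hb)).2 ⟨a, ha, w, hwa, hwb⟩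

/-- A graph covered by two independent sets has clique number at most two. -/
lemma cliqueNum_le_two {W : Type*} (H : SimpleGraph W) (P Q : W → Prop)
    (hPQ : ∀ e, P e ∨ Q e) (hP : ∀ e e', P e → P e' → ¬ H.Adj e e')
    (hQ : ∀ e e', Q e → Q e' → ¬ H.Adj e e') : H.cliqueNum ≤ 2 := by
  classical
  refine csSup_le' ?_
  rintro n ⟨K, hK⟩
  rw [← hK.card_eq, ← Finset.card_filter_add_card_filter_not (s := K) P]
  have h1 : (K.filter P).card ≤ 1 := Finset.card_le_one.2 fun a ha b hb => by
    rw [Finset.mem_filter] at ha hb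
    by_contra hne
    exact hP a b ha.2 hb.2 (hK.isClique ha.1 hb.1 hne)
  have h2 : (K.filter fun e => ¬ P e).card ≤ 1 := Finset.card_le_one.2 fun a ha b hb => by
    rw [Finset.mem_filter] at ha hb
    by_contra hne
    exact hQ a b ((hPQ a).resolve_left ha.2) ((hPQ b).resolve_left hb.2)
      (hK.isClique ha.1 hb.1 hne)
  omega

/-- If at most one point has degree above `d`, the tree-independence number of the complement of
the line graph is at most `2 * d + 1`. -/
lemma treeIndepNum_le_of_degree {W V : Type} [Fintype W] [DecidableEq V] {H : SimpleGraph W}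
    {φ : W → Sym2 V} (hφ : IsCoLineLabelling H φ) (d : ℕ)
    (hd : ∀ u v, d < (Finset.univ.filter (u ∈ φ ·)).card →
      d < (Finset.univ.filter (v ∈ φ ·)).card → u = v) : treeIndepNum H ≤ 2 * d + 1 := by
  classical
  obtain ⟨S, hS, hSd⟩ : ∃ S : Set W, (∀ e ∈ S, ∀ e' ∈ S, ¬ H.Adj e e') ∧
      ∀ v, (Finset.univ.filter fun e => e ∉ S ∧ v ∈ φ e).card ≤ d := by
    by_cases h : ∃ u, d < (Finset.univ.filter (u ∈ φ ·)).card
    · obtain ⟨u, hu⟩ := h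
      refine ⟨{e | u ∈ φ e}, fun e he e' he' hadj => (hφ e e').1 hadj u he he', fun v => ?_⟩
      by_cases huv : u = v
      · subst huv; simp
      · refine (Finset.card_le_card fun e he => ?_).trans
          (not_lt.1 fun hv => huv (hd u v hu hv))
        simp only [Finset.mem_filter] at he ⊢
        exact ⟨he.1, he.2.2⟩
    · push Not at h
      exact ⟨∅, by simp, fun v => by simpa using h v⟩
  refine Nat.sInf_le ⟨starTreeDecomp H S hS, fun i => csSup_le' ?_⟩
  rintro n ⟨t, hts, ht, rfl⟩
  rw [← Finset.card_filter_add_card_filter_not (s := t) (· ∉ S)]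
  refine Nat.add_le_add ?_ (Finset.card_le_one.2 fun a ha b hb => ?_)
  · rcases (t.filter (· ∉ S)).eq_empty_or_nonempty with hemp | ⟨k, hk⟩
    · simp [hemp]
    · refine (card_le_of_forall_meets φ _ {k} d (fun e he => ⟨k, by simp, ?_⟩) fun v => ?_).trans_eq
        (by simp)
      · by_contra hcon
        push Not at hcon
        have hadj := (hφ k e).2 hcon
        exact ht k (Finset.mem_filter.1 hk).1 e (Finset.mem_filter.1 he).1 hadj.ne hadj
      · refine (Finset.card_le_card fun e he => ?_).trans (hSd v)
        simp only [Finset.mem_filter] at he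
        simp [he.1.2, he.2]
  · simp only [Finset.mem_filter, not_not] at ha hb
    have h1 := (hts ha.1).resolve_left (not_not.2 ha.2)
    have h2 := (hts hb.1).resolve_left (not_not.2 hb.2)
    exact Option.some.inj (h1.symm.trans h2)

/-- For every graph class `𝒢`, the class of complements of line graphs of
graphs in `𝒢` is `(tw, ω)`-bounded iff it has bounded tree-independence number. -/
theorem stmt_1 (𝒢 : Set FinGraph) :
    TwOmegaBounded (coLineClass 𝒢) ↔ BddTreeIndep (coLineClass 𝒢) := by
  classical
  constructor
  · rintro ⟨f, hf⟩
    set n := f 0 + f 1 + f 2 + 2 with hn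
    refine ⟨2 * (2 * n) + 1, fun B hB => ?_⟩
    obtain ⟨A, -, ⟨g⟩⟩ := id hB
    obtain ⟨φ, hinj, hφ⟩ := exists_isCoLineLabelling g
    have := B.finite
    have := Fintype.ofFinite B.V
    refine treeIndepNum_le_of_degree hφ _ fun u v hu hv => ?_
    by_contra huv
    obtain ⟨X, Y, hX, hY, hXu, hYv, hXY⟩ := exists_disjoint_stars hinj huv n hu hv
    set s : Set B.V := {e | e ∈ X ∨ e ∈ Y}
    have hstar (w : B.V → Prop) (z : A.V) (hw : ∀ e, w e → z ∈ φ e) (e e' : s) (he : w e)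
        (he' : w e') : ¬ (B.G.induce s).Adj e e' := fun h =>
      (hφ e e').1 h z (hw _ he) (hw _ he')
    have hω : (B.G.induce s).cliqueNum ≤ 2 := cliqueNum_le_two _ (·.1 ∈ X) (·.1 ∈ Y)
      (fun e => e.2) (hstar _ u hXu) (hstar _ v hYv)
    have hcard (Z : Finset B.V) (hZ : ∀ e ∈ Z, e ∈ s) : (Z.subtype (· ∈ s)).card = Z.card := by
      rw [Finset.card_subtype, Finset.filter_true_of_mem hZ]
    have htw : n ≤ treewidth (B.G.induce s) + 1 := by
      refine le_treewidth_add_one _ (A := X.subtype (· ∈ s)) (B := Y.subtype (· ∈ s))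
        ?_ ?_ fun a ha b hb => ?_
      · rw [hcard X fun e he => Or.inl he, hX]
      · rw [hcard Y fun e he => Or.inr he, hY]
      · exact (hφ a b).2 (hXY a (Finset.mem_subtype.1 ha) b (Finset.mem_subtype.1 hb))
    have hle := hf B hB s
    interval_cases (B.G.induce s).cliqueNum <;> omega
  · rintro ⟨c, hc⟩
    refine ⟨fun w => 2 * w * c, fun B hB s => ?_⟩
    obtain ⟨A, -, ⟨g⟩⟩ := id hB
    obtain ⟨φ, -, hφ⟩ := exists_isCoLineLabelling g
    have := B.finite
    have := Fintype.ofFinite B.V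
    obtain ⟨D, hD⟩ := exists_treeDecomp_setIndepNum_le B.G
    refine Nat.sInf_le ⟨D.induce s, fun i => ?_⟩
    have hφs : IsCoLineLabelling (B.G.induce s) (fun e => φ e.1) := fun e e' => hφ e e'
    rw [Set.ncard_eq_toFinset_card']
    refine (card_le_two_mul_cliqueNum_mul hφs _ c fun t ht hind => ?_).trans (Nat.le_succ _)
    rw [← Finset.card_map (Function.Embedding.subtype _)]
    refine (card_le_setIndepNum B.G (s := D.bag i) ?_ ?_).trans ((hD i).trans (hc B hB))
    · intro e he
      obtain ⟨x, hx, rfl⟩ := Finset.mem_map.1 (Finset.mem_coe.1 he)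
      have hmem : x ∈ (D.induce s).bag i := Set.mem_toFinset.1 (ht hx)
      exact hmem
    · intro e he e' he' hne
      obtain ⟨x, hx, rfl⟩ := Finset.mem_map.1 he
      obtain ⟨x', hx', rfl⟩ := Finset.mem_map.1 he'
      exact hind x hx x' hx' fun h => hne (h ▸ rfl)
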